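/- Preservation of q-exchangeability by a column of stochastic vertices (the key step of fusion). Let J ≥ 1, i₁ ∈ ℤ_{≥0}, and q, s, u ∈ ℂ with s q^{r−1} u ≠ 1 for all 1 ≤ r ≤ J. If P₁ : {0,1}^J → ℂ is q-exchangeable, then so is the function P₂ : {0,1}^J → ℂ defined by P₂(h⃗₂) := Σ_{h⃗₁ ∈ {0,1}^J} P₁(h⃗₁) · T(i₁; h⃗₁ → h⃗₂). In words: stacking vertically J vertices with spectral parameters u, qu, …, q^{J−1}u and stochastic weights L maps q-exchangeable distributions of the incoming horizontal arrows (h⃗₁) to q-exchangeable distributions of the outgoing horizontal arrows (h⃗₂). -/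

import Mathlib

/-!
Two adjacent vertices of the column, with spectral parameters `v` and `q * v`, satisfy a local
form of the claim: after summing over the two orders of a pair of incoming arrows, weighted by a
`q`-exchangeable law, the outgoing pair `(0, 1)` is `q` times as likely as `(1, 0)`. Exchanging the
arrows at positions `r` and `r + 1` changes only the occupation number between these two vertices,
so all other vertices contribute a common factor. The contributions of an input configuration and
of its swap to the defect of exchangeability therefore cancel.
-/

noncomputable section

open Finset

/-- Stochastic vertex weights `L_{u,s}(i₁, j₁; i₂, j₂)`. -/
def Lw (q u s : ℂ) (i₁ j₁ i₂ j₂ : ℕ) : ℂ :=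
  if j₁ = 0 ∧ j₂ = 0 ∧ i₂ = i₁ then (1 - s * q ^ i₁ * u) / (1 - s * u)
  else if j₁ = 0 ∧ j₂ = 1 ∧ i₁ = i₂ + 1 then (-(s * u) + s * q ^ i₁ * u) / (1 - s * u)
  else if j₁ = 1 ∧ j₂ = 1 ∧ i₂ = i₁ then (-(s * u) + s ^ 2 * q ^ i₁) / (1 - s * u)
  else if j₁ = 1 ∧ j₂ = 0 ∧ i₂ = i₁ + 1 then (1 - s ^ 2 * q ^ i₁) / (1 - s * u)
  else 0

/-- The occupation numbers `l⁽ʳ⁾` of the inner vertical edges: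
`l⁽⁰⁾ = i₁` and `l⁽ʳ⁾ = l⁽ʳ⁻¹⁾ + h₁⁽ʳ⁾ − h₂⁽ʳ⁾`. -/
def lseq (i₁ : ℕ) (a b : ℕ → ℕ) : ℕ → ℤ
  | 0 => (i₁ : ℤ)
  | r + 1 => lseq i₁ a b r + (a r : ℤ) - (b r : ℤ)

/-- Extension of `h : Fin J → Fin 2` to a function `ℕ → ℕ` (by `0`). -/
def fext {J : ℕ} (h : Fin J → Fin 2) (r : ℕ) : ℕ :=
  if hr : r < J then (h ⟨r, hr⟩ : ℕ) else 0

/-- Column transfer weight `T(i₁; h⃗₁ → h⃗₂)`: the product of the stochastic vertex weights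
of a vertical column of `J` vertices with spectral parameters `u, qu, …, q^{J−1}u`; it is
`0` if some inner occupation number `l⁽ʳ⁾` is negative. -/
def colT (q s u : ℂ) (J : ℕ) (i₁ : ℕ) (h₁ h₂ : Fin J → Fin 2) : ℂ :=
  if ∀ r ∈ Finset.range (J + 1), 0 ≤ lseq i₁ (fext h₁) (fext h₂) r then
    ∏ r ∈ Finset.range J,
      Lw q (q ^ r * u) s (lseq i₁ (fext h₁) (fext h₂) r).toNat (fext h₁ r)
        (lseq i₁ (fext h₁) (fext h₂) (r + 1)).toNat (fext h₂ r)
  else 0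

/-- A function `P : {0,1}^J → ℂ` is `q`-exchangeable if for every `h⃗` with `h⁽ʳ⁾ = 1` and
`h⁽ʳ⁺¹⁾ = 0` one has `P(σ_r h⃗) = q · P(h⃗)`, where `σ_r` swaps coordinates `r` and `r+1`. -/
def IsQExch (q : ℂ) {J : ℕ} (P : (Fin J → Fin 2) → ℂ) : Prop :=
  ∀ (h : Fin J → Fin 2) (r : ℕ) (hr : r + 1 < J),
    h ⟨r, Nat.lt_of_succ_lt hr⟩ = 1 → h ⟨r + 1, hr⟩ = 0 →
      P (fun i => h (Equiv.swap ⟨r, Nat.lt_of_succ_lt hr⟩ ⟨r + 1, hr⟩ i)) = q * P h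

section VertexWeights

variable (q u s : ℂ) (n : ℕ)

lemma Lw_zero_zero : Lw q u s n 0 n 0 = (1 - s * q ^ n * u) / (1 - s * u) := by
  simp [Lw]

lemma Lw_zero_one : Lw q u s (n + 1) 0 n 1 = (-(s * u) + s * q ^ (n + 1) * u) / (1 - s * u) := by
  simp [Lw]

lemma Lw_one_one : Lw q u s n 1 n 1 = (-(s * u) + s ^ 2 * q ^ n) / (1 - s * u) := by
  simp [Lw]

lemma Lw_one_zero : Lw q u s n 1 (n + 1) 0 = (1 - s ^ 2 * q ^ n) / (1 - s * u) := by
  simp [Lw]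

lemma Lw_eq_zero_of_add_ne {i₁ j₁ i₂ j₂ : ℕ} (h : i₁ + j₁ ≠ i₂ + j₂) :
    Lw q u s i₁ j₁ i₂ j₂ = 0 := by
  unfold Lw
  split_ifs <;> first | omega | rfl

lemma Lw_zero_zero_zero_one : Lw q u s 0 0 0 1 = 0 :=
  Lw_eq_zero_of_add_ne q u s (by decide)

end VertexWeights

section AdjacentVertices

/-- The joint weight of two consecutive vertices with spectral parameters `u` and `q * u`, with
`n` paths entering from below, incoming arrows `a, a'` and outgoing arrows `b, b'`. Where the
subtractions truncate, arrow conservation makes one of the two factors vanish. -/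
def pairWeight (q u s : ℂ) (n a a' b b' : ℕ) : ℂ :=
  Lw q u s n a (n + a - b) b * Lw q (q * u) s (n + a - b) a' (n + a + a' - b - b') b'

/-- The amount by which the outgoing arrows of two consecutive vertices with incoming arrows
`a, a'` fail to be `q`-exchangeable. -/
def pairDefect (q u s : ℂ) (n a a' : ℕ) : ℂ :=
  pairWeight q u s n a a' 0 1 - q * pairWeight q u s n a a' 1 0

variable (q u s : ℂ) (n : ℕ)

lemma pairDefect_zero_zero : pairDefect q u s n 0 0 = 0 := by
  cases n with
  | zero =>
    simp only [pairDefect, pairWeight, Nat.add_zero, Nat.sub_zero, Nat.zero_sub,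
      Lw_zero_zero_zero_one, mul_zero, zero_mul, sub_zero]
  | succ n =>
    simp only [pairDefect, pairWeight, Nat.add_zero, Nat.sub_zero, Nat.add_sub_cancel,
      Lw_zero_zero, Lw_zero_one]
    ring

lemma pairDefect_one_one : pairDefect q u s n 1 1 = 0 := by
  simp only [pairDefect, pairWeight, Nat.sub_zero, Nat.add_sub_cancel, Lw_one_zero, Lw_one_one]
  ring

lemma mul_pairDefect_zero_one_add_pairDefect_one_zero :
    q * pairDefect q u s n 0 1 + pairDefect q u s n 1 0 = 0 := by
  cases n with
  | zero =>
    simp only [pairDefect, pairWeight, Nat.add_zero, Nat.zero_add, Nat.sub_zero, Nat.sub_self,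
      Nat.zero_sub, Lw_zero_zero_zero_one, Lw_zero_zero, Lw_one_one, Lw_one_zero,
      Lw_zero_one q _ s 0]
    ring
  | succ n =>
    simp only [pairDefect, pairWeight, Nat.add_zero, Nat.sub_zero, Nat.add_one_sub_one,
      Lw_zero_zero, Lw_zero_one, Lw_one_one, Lw_one_zero]
    ring

end AdjacentVertices

section OccupationNumbers

lemma sum_range_comp_swap {M : Type*} [AddCommMonoid M] (f : ℕ → M) {r n : ℕ} (hn : n ≠ r + 1) :
    ∑ k ∈ range n, f (Equiv.swap r (r + 1) k) = ∑ k ∈ range n, f k := by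
  refine Finset.sum_equiv (Equiv.swap r (r + 1)) (fun k => ?_) fun _ _ => rfl
  rw [mem_range, mem_range, Equiv.swap_apply_def]
  split_ifs <;> omega

variable (i : ℕ) (a b : ℕ → ℕ) {r n : ℕ}

lemma lseq_eq_add_sum_sub_sum (n : ℕ) :
    lseq i a b n = i + ∑ k ∈ range n, (a k : ℤ) - ∑ k ∈ range n, (b k : ℤ) := by
  induction n with
  | zero => simp [lseq]
  | succ n ih =>
    rw [lseq, ih, sum_range_succ, sum_range_succ]
    ring

lemma lseq_comp_swap_left (hn : n ≠ r + 1) :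
    lseq i (a ∘ Equiv.swap r (r + 1)) b n = lseq i a b n := by
  simp only [lseq_eq_add_sum_sub_sum, Function.comp_apply,
    sum_range_comp_swap (fun k => (a k : ℤ)) hn]

lemma lseq_comp_swap_right (hn : n ≠ r + 1) :
    lseq i a (b ∘ Equiv.swap r (r + 1)) n = lseq i a b n := by
  simp only [lseq_eq_add_sum_sub_sum, Function.comp_apply,
    sum_range_comp_swap (fun k => (b k : ℤ)) hn]

end OccupationNumbers

section Column

/-- The weight of the `k`-th vertex (counted from `0`) of a column with `i` paths entering from
below, incoming arrows `a` and outgoing arrows `b`. -/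
def colVertex (q s u : ℂ) (i : ℕ) (a b : ℕ → ℕ) (k : ℕ) : ℂ :=
  Lw q (q ^ k * u) s (lseq i a b k).toNat (a k) (lseq i a b (k + 1)).toNat (b k)

/-- The weight of a column of `J` vertices with the vertices `r` and `r + 1` left out. -/
def colRest (q s u : ℂ) (J i r : ℕ) (a b : ℕ → ℕ) : ℂ :=
  ∏ k ∈ range J \ {r, r + 1}, colVertex q s u i a b k

variable (q s u : ℂ) (i : ℕ)

lemma exists_colVertex_eq_zero_of_lseq_neg {a b : ℕ → ℕ} {n : ℕ} (hn : lseq i a b n < 0) :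
    ∃ k < n, colVertex q s u i a b k = 0 := by
  induction n with
  | zero => exact absurd hn (Int.natCast_nonneg i).not_gt
  | succ n ih =>
    rcases lt_or_ge (lseq i a b n) 0 with hneg | hnonneg
    · obtain ⟨k, hk, hk0⟩ := ih hneg
      exact ⟨k, hk.trans n.lt_succ_self, hk0⟩
    · refine ⟨n, n.lt_succ_self, Lw_eq_zero_of_add_ne _ _ _ ?_⟩
      rw [lseq] at hn ⊢
      omega

-- The nonnegativity condition in `colT` is automatic: where an occupation number first becomes
-- negative, arrow conservation fails and the vertex weight vanishes.
lemma colT_eq_prod_colVertex {J : ℕ} (h₁ h₂ : Fin J → Fin 2) :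
    colT q s u J i h₁ h₂ = ∏ k ∈ range J, colVertex q s u i (fext h₁) (fext h₂) k := by
  unfold colT
  split_ifs with hnonneg
  · rfl
  · push Not at hnonneg
    obtain ⟨n, hn, hneg⟩ := hnonneg
    obtain ⟨k, hk, hk0⟩ := exists_colVertex_eq_zero_of_lseq_neg q s u i hneg
    exact (prod_eq_zero (mem_range.2 (hk.trans_le (mem_range_succ_iff.1 hn))) hk0).symm

lemma colRest_eq_zero_of_lseq_neg {J r : ℕ} (hr : r ≤ J) {a b : ℕ → ℕ}
    (hneg : lseq i a b r < 0) : colRest q s u J i r a b = 0 := by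
  obtain ⟨k, hk, hk0⟩ := exists_colVertex_eq_zero_of_lseq_neg q s u i hneg
  refine prod_eq_zero ?_ hk0
  simp only [mem_sdiff, mem_range, mem_insert, mem_singleton]
  omega

lemma colVertex_mul_colVertex_succ {a b : ℕ → ℕ} {r : ℕ} (hr : 0 ≤ lseq i a b r) :
    colVertex q s u i a b r * colVertex q s u i a b (r + 1) =
      pairWeight q (q ^ r * u) s (lseq i a b r).toNat (a r) (a (r + 1)) (b r) (b (r + 1)) := by
  have hmid : (lseq i a b (r + 1)).toNat = (lseq i a b r).toNat + a r - b r := by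
    rw [lseq]
    omega
  have htop : (lseq i a b (r + 1 + 1)).toNat =
      (lseq i a b r).toNat + a r + a (r + 1) - b r - b (r + 1) := by
    rw [lseq, lseq]
    omega
  rw [pairWeight, colVertex, colVertex, hmid, htop, pow_succ', mul_assoc]

lemma colT_eq_colRest_mul_pairWeight {J r : ℕ} (hr : r + 1 < J) (h₁ h₂ : Fin J → Fin 2) :
    colT q s u J i h₁ h₂ = colRest q s u J i r (fext h₁) (fext h₂) *
      pairWeight q (q ^ r * u) s (lseq i (fext h₁) (fext h₂) r).toNat
        (fext h₁ r) (fext h₁ (r + 1)) (fext h₂ r) (fext h₂ (r + 1)) := by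
  have hsub : {r, r + 1} ⊆ range J := by
    simp only [insert_subset_iff, singleton_subset_iff, mem_range]
    omega
  have hsplit : colT q s u J i h₁ h₂ = colRest q s u J i r (fext h₁) (fext h₂) *
      (colVertex q s u i (fext h₁) (fext h₂) r *
        colVertex q s u i (fext h₁) (fext h₂) (r + 1)) := by
    rw [colT_eq_prod_colVertex, ← prod_sdiff hsub, prod_pair r.succ_ne_self.symm, colRest]
  rcases lt_or_ge (lseq i (fext h₁) (fext h₂) r) 0 with hneg | hnonneg
  · rw [hsplit, colRest_eq_zero_of_lseq_neg q s u i (by omega) hneg, zero_mul, zero_mul]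
  · rw [hsplit, colVertex_mul_colVertex_succ q s u i hnonneg]

lemma colRest_congr {J r : ℕ} {a a' b b' : ℕ → ℕ}
    (hl : ∀ k, k ≠ r + 1 → lseq i a b k = lseq i a' b' k)
    (ha : ∀ k, k ≠ r → k ≠ r + 1 → a k = a' k) (hb : ∀ k, k ≠ r → k ≠ r + 1 → b k = b' k) :
    colRest q s u J i r a b = colRest q s u J i r a' b' := by
  refine prod_congr rfl fun k hk => ?_
  obtain ⟨hkr, hkr'⟩ : k ≠ r ∧ k ≠ r + 1 := by
    simpa only [mem_insert, mem_singleton, not_or] using (mem_sdiff.1 hk).2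
  rw [colVertex, colVertex, hl k hkr', hl (k + 1) (by omega), ha k hkr hkr', hb k hkr hkr']

lemma colRest_comp_swap_left (J r : ℕ) (a b : ℕ → ℕ) :
    colRest q s u J i r (a ∘ Equiv.swap r (r + 1)) b = colRest q s u J i r a b :=
  colRest_congr q s u i (fun _ => lseq_comp_swap_left i a b)
    (fun _ hk hk' => congrArg a (Equiv.swap_apply_of_ne_of_ne hk hk')) fun _ _ _ => rfl

lemma colRest_comp_swap_right (J r : ℕ) (a b : ℕ → ℕ) :
    colRest q s u J i r a (b ∘ Equiv.swap r (r + 1)) = colRest q s u J i r a b :=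
  colRest_congr q s u i (fun _ => lseq_comp_swap_right i a b) (fun _ _ _ => rfl)
    fun _ hk hk' => congrArg b (Equiv.swap_apply_of_ne_of_ne hk hk')

end Column

section Exchange

/-- The configuration `h` with the entries at positions `r` and `r + 1` (counted from `0`)
exchanged. -/
def swapAt {J r : ℕ} (hr : r + 1 < J) (h : Fin J → Fin 2) : Fin J → Fin 2 :=
  fun k => h (Equiv.swap ⟨r, Nat.lt_of_succ_lt hr⟩ ⟨r + 1, hr⟩ k)

/-- `q`-exchangeability at the single pair of positions `r` and `r + 1`. -/
def IsQExchAt (q : ℂ) {J r : ℕ} (hr : r + 1 < J) (P : (Fin J → Fin 2) → ℂ) : Prop :=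
  ∀ h : Fin J → Fin 2, h ⟨r, Nat.lt_of_succ_lt hr⟩ = 1 → h ⟨r + 1, hr⟩ = 0 →
    P (swapAt hr h) = q * P h

variable {J r : ℕ} (hr : r + 1 < J)

lemma swapAt_apply_left (h : Fin J → Fin 2) :
    swapAt hr h ⟨r, Nat.lt_of_succ_lt hr⟩ = h ⟨r + 1, hr⟩ :=
  congrArg h (Equiv.swap_apply_left _ _)

lemma swapAt_apply_right (h : Fin J → Fin 2) :
    swapAt hr h ⟨r + 1, hr⟩ = h ⟨r, Nat.lt_of_succ_lt hr⟩ :=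
  congrArg h (Equiv.swap_apply_right _ _)

lemma swapAt_involutive : Function.Involutive (swapAt hr) :=
  fun h => funext fun k => congrArg h ((Equiv.swap _ _).symm_apply_apply k)

lemma fext_apply {k : ℕ} (hk : k < J) (h : Fin J → Fin 2) : fext h k = h ⟨k, hk⟩ :=
  dif_pos hk

lemma fext_swapAt (h : Fin J → Fin 2) :
    fext (swapAt hr h) = fext h ∘ Equiv.swap r (r + 1) := by
  funext k
  simp only [fext, swapAt, Function.comp_apply, Equiv.swap_apply_def, Fin.mk.injEq]
  split_ifs <;> first | rfl | omega

variable {q : ℂ} (s u : ℂ)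

lemma IsQExchAt.mul_pairDefect_add_swapAt_mul_pairDefect {hr : r + 1 < J}
    {P : (Fin J → Fin 2) → ℂ} (hP : IsQExchAt q hr P) (n : ℕ) (g : Fin J → Fin 2) :
    P g * pairDefect q u s n (fext g r) (fext g (r + 1)) +
      P (swapAt hr g) * pairDefect q u s n (fext g (r + 1)) (fext g r) = 0 := by
  have eq_zero_or_one : ∀ x : Fin 2, x = 0 ∨ x = 1 := by decide
  rw [fext_apply hr, fext_apply (Nat.lt_of_succ_lt hr)]
  rcases eq_zero_or_one (g ⟨r, Nat.lt_of_succ_lt hr⟩) with hgr | hgr <;>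
    rcases eq_zero_or_one (g ⟨r + 1, hr⟩) with hgr' | hgr' <;>
    simp only [hgr, hgr', Fin.val_zero, Fin.val_one]
  · rw [pairDefect_zero_zero, mul_zero, mul_zero, add_zero]
  · have hPg : P g = q * P (swapAt hr g) := by
      simpa only [swapAt_involutive hr g] using
        hP (swapAt hr g) ((swapAt_apply_left hr g).trans hgr') ((swapAt_apply_right hr g).trans hgr)
    rw [hPg]
    linear_combination
      P (swapAt hr g) * mul_pairDefect_zero_one_add_pairDefect_one_zero q u s n
  · rw [hP g hgr hgr']
    linear_combination P g * mul_pairDefect_zero_one_add_pairDefect_one_zero q u s n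
  · rw [pairDefect_one_one, mul_zero, mul_zero, add_zero]

lemma colT_swapAt_sub_mul_colT (i : ℕ) {h : Fin J → Fin 2}
    (h₁ : h ⟨r, Nat.lt_of_succ_lt hr⟩ = 1) (h₀ : h ⟨r + 1, hr⟩ = 0) (g : Fin J → Fin 2) :
    colT q s u J i g (swapAt hr h) - q * colT q s u J i g h =
      colRest q s u J i r (fext g) (fext h) *
        pairDefect q (q ^ r * u) s (lseq i (fext g) (fext h) r).toNat
          (fext g r) (fext g (r + 1)) := by
  have hfext₁ : fext h r = 1 := by rw [fext_apply (Nat.lt_of_succ_lt hr), h₁, Fin.val_one]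
  have hfext₀ : fext h (r + 1) = 0 := by rw [fext_apply hr, h₀, Fin.val_zero]
  simp only [colT_eq_colRest_mul_pairWeight q s u i hr, fext_swapAt, colRest_comp_swap_right,
    lseq_comp_swap_right i _ _ r.succ_ne_self.symm, Function.comp_apply, Equiv.swap_apply_left,
    Equiv.swap_apply_right, hfext₁, hfext₀, pairDefect]
  ring

lemma IsQExchAt.sum_mul_colT {hr : r + 1 < J} {P : (Fin J → Fin 2) → ℂ}
    (hP : IsQExchAt q hr P) (i : ℕ) :
    IsQExchAt q hr (fun h₂ => ∑ h₁ : Fin J → Fin 2, P h₁ * colT q s u J i h₁ h₂) := by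
  intro h h₁ h₀
  let defect (g : Fin J → Fin 2) : ℂ :=
    P g * (colT q s u J i g (swapAt hr h) - q * colT q s u J i g h)
  have defect_add_swapAt (g : Fin J → Fin 2) : defect g + defect (swapAt hr g) = 0 := by
    simp only [defect, colT_swapAt_sub_mul_colT hr s u i h₁ h₀, fext_swapAt,
      colRest_comp_swap_left, lseq_comp_swap_left i _ _ r.succ_ne_self.symm,
      Function.comp_apply, Equiv.swap_apply_left, Equiv.swap_apply_right]
    linear_combination colRest q s u J i r (fext g) (fext h) *
      hP.mul_pairDefect_add_swapAt_mul_pairDefect s (q ^ r * u)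
        (lseq i (fext g) (fext h) r).toNat g
  have sum_defect : ∑ g, defect g = 0 := by
    refine sum_involution (fun g _ => swapAt hr g) (fun g _ => defect_add_swapAt g)
      (fun g _ hne hfix => hne ?_) (fun _ _ => mem_univ _) fun g _ => swapAt_involutive hr g
    have hdouble := defect_add_swapAt g
    rwa [hfix, add_self_eq_zero] at hdouble
  rw [← sub_eq_zero, ← sum_defect, mul_sum, ← sum_sub_distrib]
  exact sum_congr rfl fun g _ => by ring

end Exchange

/-- **Preservation of `q`-exchangeability by a column of stochastic vertices** (the key
step of fusion): stacking vertically `J` vertices with spectral parameters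
`u, qu, …, q^{J−1}u` maps `q`-exchangeable distributions of the incoming horizontal arrows
to `q`-exchangeable distributions of the outgoing horizontal arrows. -/
theorem statement9 (q s u : ℂ) (J : ℕ) (hJ : 1 ≤ J) (i₁ : ℕ)
    (hsu : ∀ r ∈ Finset.range J, s * (q ^ r * u) ≠ 1)
    (P₁ : (Fin J → Fin 2) → ℂ) (hP₁ : IsQExch q P₁) :
    IsQExch q (fun h₂ => ∑ h₁ : Fin J → Fin 2, P₁ h₁ * colT q s u J i₁ h₁ h₂) :=
  fun h r hr =>
    have hP₁r : IsQExchAt q hr P₁ := fun g => hP₁ g r hr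
    hP₁r.sum_mul_colT s u i₁ h

end
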